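/- If two countable recursively saturated models M and N of PA have the same theory and the same standard system, then they are isomorphic. -/

import Mathlib

/-! # A deep embedding of the language of arithmetic and of Peano Arithmetic -/

/-- Terms of the language `{0, 1, +, ⬝, <}` of arithmetic, with variables
indexed by natural numbers. -/
inductive ATerm : Type
  | var : ℕ → ATerm
  | zero : ATerm
  | one : ATerm
  | add : ATerm → ATerm → ATerm
  | mul : ATerm → ATerm → ATerm
deriving DecidableEq

/-- First-order formulas of the language of arithmetic, with logical constants
`¬, ∨, ∃, =` (and the ordering `<`). -/
inductive AForm : Type
  | eq : ATerm → ATerm → AForm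
  | lt : ATerm → ATerm → AForm
  | not : AForm → AForm
  | or : AForm → AForm → AForm
  | ex : ℕ → AForm → AForm
deriving DecidableEq

namespace ATerm

/-- Value of a term in a structure, under an assignment. -/
def val {M : Type*} [Zero M] [One M] [Add M] [Mul M] (a : ℕ → M) : ATerm → M
  | var n => a n
  | zero => 0
  | one => 1
  | add s t => s.val a + t.val a
  | mul s t => s.val a * t.val a

/-- Free variables of a term. -/
def fv : ATerm → Finset ℕ
  | var n => {n}
  | zero => ∅
  | one => ∅
  | add s t => s.fv ∪ t.fv
  | mul s t => s.fv ∪ t.fv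

/-- Substitution of a term for a variable in a term. -/
def subst (v : ℕ) (t : ATerm) : ATerm → ATerm
  | var n => if n = v then t else var n
  | zero => zero
  | one => one
  | add s u => add (subst v t s) (subst v t u)
  | mul s u => mul (subst v t s) (subst v t u)

end ATerm

namespace AForm

/-- Tarskian satisfaction of a formula in a structure, under an assignment. -/
def Sat {M : Type*} [Zero M] [One M] [Add M] [Mul M] [LT M] (a : ℕ → M) : AForm → Prop
  | eq s t => s.val a = t.val a
  | lt s t => s.val a < t.val a
  | not φ => ¬ φ.Sat a
  | or φ ψ => φ.Sat a ∨ ψ.Sat a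
  | ex n φ => ∃ x : M, φ.Sat (Function.update a n x)

/-- Free variables of a formula. -/
def fv : AForm → Finset ℕ
  | eq s t => s.fv ∪ t.fv
  | lt s t => s.fv ∪ t.fv
  | not φ => φ.fv
  | or φ ψ => φ.fv ∪ ψ.fv
  | ex n φ => φ.fv.erase n

/-- Substitution of a term for a variable in a formula (stopping at binders of
the same variable). -/
def subst (v : ℕ) (t : ATerm) : AForm → AForm
  | eq s u => eq (ATerm.subst v t s) (ATerm.subst v t u)
  | lt s u => lt (ATerm.subst v t s) (ATerm.subst v t u)
  | not φ => not (subst v t φ)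
  | or φ ψ => or (subst v t φ) (subst v t ψ)
  | ex n φ => if n = v then ex n φ else ex n (subst v t φ)

/-- Implication, defined from `¬` and `∨`. -/
def imp (φ ψ : AForm) : AForm := or (not φ) ψ

/-- Conjunction, defined from `¬` and `∨`. -/
def and (φ ψ : AForm) : AForm := not (or (not φ) (not ψ))

/-- Universal quantification, defined from `¬` and `∃`. -/
def all (n : ℕ) (φ : AForm) : AForm := not (ex n (not φ))

end AForm

open ATerm AForm

/-- The finitely many base (PA⁻) axioms of Peano Arithmetic, as (open)
formulas; their universal closures are understood semantically. -/
def paBaseAx : List AForm :=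
  let x := var 0; let y := var 1; let z := var 2
  [ AForm.eq (ATerm.add x (ATerm.add y z)) (ATerm.add (ATerm.add x y) z)
  , AForm.eq (ATerm.add x y) (ATerm.add y x)
  , AForm.eq (ATerm.mul x (ATerm.mul y z)) (ATerm.mul (ATerm.mul x y) z)
  , AForm.eq (ATerm.mul x y) (ATerm.mul y x)
  , AForm.eq (ATerm.mul x (ATerm.add y z)) (ATerm.add (ATerm.mul x y) (ATerm.mul x z))
  , AForm.eq (ATerm.add x ATerm.zero) x
  , AForm.eq (ATerm.mul x ATerm.zero) ATerm.zero
  , AForm.eq (ATerm.mul x ATerm.one) x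
  , AForm.not (AForm.lt x x)
  , AForm.imp (AForm.lt x y) (AForm.imp (AForm.lt y z) (AForm.lt x z))
  , AForm.or (AForm.lt x y) (AForm.or (AForm.eq x y) (AForm.lt y x))
  , AForm.imp (AForm.lt x y) (AForm.lt (ATerm.add x z) (ATerm.add y z))
  , AForm.imp (AForm.lt ATerm.zero z)
      (AForm.imp (AForm.lt x y) (AForm.lt (ATerm.mul x z) (ATerm.mul y z)))
  , AForm.not (AForm.lt x ATerm.zero)
  , AForm.and (AForm.imp (AForm.lt x y)
        (AForm.or (AForm.lt (ATerm.add x ATerm.one) y) (AForm.eq (ATerm.add x ATerm.one) y)))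
      (AForm.imp (AForm.or (AForm.lt (ATerm.add x ATerm.one) y) (AForm.eq (ATerm.add x ATerm.one) y))
        (AForm.lt x y))
  , AForm.lt ATerm.zero ATerm.one ]

/-- The induction axiom for the formula `φ` in the variable `v`:
`(φ(0) ∧ ∀v (φ(v) → φ(v+1))) → ∀v φ(v)` (an open formula; its universal
closure is understood semantically). -/
def indAx (v : ℕ) (φ : AForm) : AForm :=
  AForm.imp
    (AForm.and (φ.subst v ATerm.zero)
      (AForm.all v (AForm.imp φ (φ.subst v (ATerm.add (ATerm.var v) ATerm.one)))))
    (AForm.all v φ)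

/-- The axioms of Peano Arithmetic: the base axioms together with the full
induction scheme. -/
def PAax : Set AForm :=
  {φ | φ ∈ paBaseAx} ∪ {ψ | ∃ (v : ℕ) (φ : AForm), ψ = indAx v φ}

/-- `M` is a model of PA: every axiom of PA is satisfied under every
assignment. -/
def IsPAModel (M : Type*) [Zero M] [One M] [Add M] [Mul M] [LT M] : Prop :=
  ∀ φ ∈ PAax, ∀ a : ℕ → M, AForm.Sat a φ

/-- The standard (numeral) embedding of ℕ into a structure. -/
def std {M : Type*} [Zero M] [One M] [Add M] : ℕ → M :=
  fun n => n.rec (0 : M) fun _ ih => ih + 1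

section InternalArithmetic

variable {M : Type*} [Zero M] [One M] [Add M] [Mul M] [LT M]

/-- `≤` in a model. -/
def mle (a b : M) : Prop := a < b ∨ a = b

/-- Internal divisibility. -/
def mdvd (a b : M) : Prop := ∃ c : M, a * c = b

/-- Gödel's β-function, internally: `β(c, d, i) = y`. -/
def mbeta (c d i y : M) : Prop :=
  ∃ q : M, c = (1 + (i + 1) * d) * q + y ∧ y < 1 + (i + 1) * d

/-- Internal exponentiation, via the β-function: `p ^ i = y`. -/
def mpow (p i y : M) : Prop :=
  ∃ c d : M, mbeta c d 0 1 ∧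
    (∀ j u : M, j < i → mbeta c d j u → mbeta c d (j + 1) (p * u)) ∧
    mbeta c d i y

/-- Internal Ackermann membership: the `a`-th binary digit of `b` is `1`. -/
def mack (a b : M) : Prop :=
  ∃ p u v : M, mpow (1 + 1) a p ∧ b = u * (p + p) + (p + v) ∧ v < p

/-- `(c)` at the prime `p`: the exponent of `p` in the prime factorization of
`c` is `k`. -/
def mexpAt (p c k : M) : Prop :=
  ∃ v : M, mpow p k v ∧ mdvd v c ∧ ¬ mdvd (v * p) c

end InternalArithmetic

/-- A proper cut of a model: a nonempty proper initial segment closed under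
successor. -/
def IsCut {M : Type*} [Zero M] [One M] [Add M] [Mul M] [LT M] (I : Set M) : Prop :=
  I.Nonempty ∧ I ≠ Set.univ ∧ (∀ x ∈ I, ∀ y : M, y < x → y ∈ I) ∧ ∀ x ∈ I, x + 1 ∈ I

/-- The cut `I` is ℕ-coded from below in `M`: for some `c`, the set
`{(c)_n : n ∈ ℕ}` of exponents of the standard primes in `c` is cofinal in `I`. -/
def CodedFromBelow {M : Type*} [Zero M] [One M] [Add M] [Mul M] [LT M] (I : Set M) : Prop :=
  ∃ c : M, ∀ x ∈ I, ∃ (n : ℕ) (k : M),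
    mexpAt (std (Nat.nth Nat.Prime n)) c k ∧ k ∈ I ∧ mle x k

/-- The cut `I` is ℕ-coded from above in `M`: for some `c`, the set
`{(c)_n : n ∈ ℕ}` is downward cofinal in `M \ I`. -/
def CodedFromAbove {M : Type*} [Zero M] [One M] [Add M] [Mul M] [LT M] (I : Set M) : Prop :=
  ∃ c : M, ∀ x ∉ I, ∃ (n : ℕ) (k : M),
    mexpAt (std (Nat.nth Nat.Prime n)) c k ∧ k ∉ I ∧ mle k x

/-- The standard system of a model: the sets of natural numbers coded in `M`
via (internal) Ackermann membership. -/
def SSy (M : Type*) [Zero M] [One M] [Add M] [Mul M] [LT M] : Set (Set ℕ) :=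
  {A : Set ℕ | ∃ c : M, ∀ n : ℕ, n ∈ A ↔ mack (std n) c}

/-- A Gödel numbering of terms. -/
def encT : ATerm → ℕ
  | ATerm.var n => Nat.pair 0 n
  | ATerm.zero => Nat.pair 1 0
  | ATerm.one => Nat.pair 2 0
  | ATerm.add s t => Nat.pair 3 (Nat.pair (encT s) (encT t))
  | ATerm.mul s t => Nat.pair 4 (Nat.pair (encT s) (encT t))

/-- A Gödel numbering of formulas. -/
def encF : AForm → ℕ
  | AForm.eq s t => Nat.pair 0 (Nat.pair (encT s) (encT t))
  | AForm.lt s t => Nat.pair 1 (Nat.pair (encT s) (encT t))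
  | AForm.not φ => Nat.pair 2 (encF φ)
  | AForm.or φ ψ => Nat.pair 3 (Nat.pair (encF φ) (encF ψ))
  | AForm.ex n φ => Nat.pair 4 (Nat.pair n (encF φ))

/-- `M` is recursively saturated: every recursive type in one variable `v`,
with finitely many parameters, that is finitely satisfiable in `M` is realized
in `M`. -/
def RecSat (M : Type*) [Zero M] [One M] [Add M] [Mul M] [LT M] : Prop :=
  ∀ (Φ : Set AForm) (v : ℕ) (a : ℕ → M),
    ComputablePred (fun n : ℕ => ∃ φ ∈ Φ, encF φ = n) →
    (∃ s : Finset ℕ, ∀ φ ∈ Φ, AForm.fv φ ⊆ insert v s) →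
    (∀ s : Finset AForm, ↑s ⊆ Φ →
      ∃ x : M, ∀ φ ∈ s, AForm.Sat (Function.update a v x) φ) →
    ∃ x : M, ∀ φ ∈ Φ, AForm.Sat (Function.update a v x) φ

/-!
The formulas `⌜φ⌝ ∈ d ↔ φ`, where `φ` ranges over the formulas in the variables of a tuple, form a
recursive set in which the truth values of the `φ` do not occur. With `d` as the unknown they are a
type, finitely satisfiable because every finite set of natural numbers has a code, so a recursively
saturated model codes the complete type of each of its tuples in its standard system. Another such
model with the same standard system has a code for this type too. Taking that code as a parameter
and the last entry of the tuple as the unknown, the same formulas form a recursive type whose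
realization extends a partial elementary map by one point. A back-and-forth of length `ω` produces
the isomorphism.
-/

namespace ATerm

theorem val_congr {M : Type*} [Zero M] [One M] [Add M] [Mul M] {t : ATerm} {a b : ℕ → M}
    (h : ∀ i ∈ t.fv, a i = b i) : t.val a = t.val b := by
  induction t with
  | var n => exact h n (Finset.mem_singleton_self n)
  | zero | one => rfl
  | add s u hs hu | mul s u hs hu =>
    simp only [fv, Finset.mem_union] at h
    simp only [val, hs fun i hi => h i (.inl hi), hu fun i hi => h i (.inr hi)]

end ATerm

namespace AForm

section Sat

variable {M : Type*} [Zero M] [One M] [Add M] [Mul M] [LT M]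

theorem sat_congr {φ : AForm} {a b : ℕ → M} (h : ∀ i ∈ φ.fv, a i = b i) :
    φ.Sat a ↔ φ.Sat b := by
  induction φ generalizing a b with
  | eq s t | lt s t =>
    simp only [fv, Finset.mem_union] at h
    simp only [Sat, ATerm.val_congr fun i hi => h i (.inl hi),
      ATerm.val_congr fun i hi => h i (.inr hi)]
  | not φ ih => exact not_congr (ih h)
  | or φ ψ hφ hψ =>
    simp only [fv, Finset.mem_union] at h
    exact or_congr (hφ fun i hi => h i (.inl hi)) (hψ fun i hi => h i (.inr hi))
  | ex n φ ih =>
    refine exists_congr fun x => ih fun i hi => ?_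
    obtain rfl | hin := eq_or_ne i n
    · simp
    · simpa [hin] using h i (Finset.mem_erase.2 ⟨hin, hi⟩)

theorem sat_congr_of_fv_subset_range {φ : AForm} {k : ℕ} (hφ : φ.fv ⊆ Finset.range k)
    {a b : ℕ → M} (h : ∀ i < k, a i = b i) : φ.Sat a ↔ φ.Sat b :=
  sat_congr fun i hi => h i (Finset.mem_range.1 (hφ hi))

theorem sat_iff_forall_sat {φ : AForm} (hφ : φ.fv = ∅) (a : ℕ → M) :
    φ.Sat a ↔ ∀ b : ℕ → M, φ.Sat b :=
  ⟨fun ha _ => (sat_congr (by simp [hφ])).1 ha, fun h => h a⟩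

@[simp]
theorem sat_and {φ ψ : AForm} {a : ℕ → M} : (φ.and ψ).Sat a ↔ φ.Sat a ∧ ψ.Sat a := by
  simp [AForm.and, Sat]

@[simp]
theorem sat_imp {φ ψ : AForm} {a : ℕ → M} : (φ.imp ψ).Sat a ↔ (φ.Sat a → ψ.Sat a) := by
  simp [imp, Sat, imp_iff_not_or]

end Sat

/-- Equivalence of formulas, defined from `→` and `∧`. -/
def iff (φ ψ : AForm) : AForm := (φ.imp ψ).and (ψ.imp φ)

@[simp]
theorem sat_iff {M : Type*} [Zero M] [One M] [Add M] [Mul M] [LT M] {φ ψ : AForm} {a : ℕ → M} :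
    (φ.iff ψ).Sat a ↔ (φ.Sat a ↔ ψ.Sat a) := by
  simp [AForm.iff, iff_def]

theorem fv_and (φ ψ : AForm) : (φ.and ψ).fv = φ.fv ∪ ψ.fv := rfl

theorem fv_iff (φ ψ : AForm) : (φ.iff ψ).fv = φ.fv ∪ ψ.fv := by
  change φ.fv ∪ ψ.fv ∪ (ψ.fv ∪ φ.fv) = _
  rw [Finset.union_comm ψ.fv, Finset.union_self]

theorem exists_sat_forall_mem_sat_iff {M : Type*} (N : Type*) [Zero M] [One M] [Add M] [Mul M]
    [LT M] [Zero N] [One N] [Add N] [Mul N] [LT N] (a : ℕ → M) {V : Finset ℕ} (s : Finset AForm)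
    (hs : ∀ φ ∈ s, φ.fv ⊆ V) :
    ∃ χ : AForm, χ.fv ⊆ V ∧ χ.Sat a ∧
      ∀ b : ℕ → N, χ.Sat b → ∀ φ ∈ s, (φ.Sat a ↔ φ.Sat b) := by
  induction s using Finset.induction_on with
  | empty => exact ⟨eq zero zero, Finset.empty_subset V, rfl, by simp⟩
  | insert φ s _ ih =>
    obtain ⟨hφ, hs⟩ := Finset.forall_mem_insert _ _ _ |>.1 hs
    obtain ⟨χ, hχV, hχa, hχ⟩ := ih hs
    obtain ⟨lit, hlitV, hlita, hlit⟩ : ∃ lit : AForm, lit.fv ⊆ V ∧ lit.Sat a ∧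
        ∀ b : ℕ → N, lit.Sat b → (φ.Sat a ↔ φ.Sat b) := by
      by_cases hφa : φ.Sat a
      · exact ⟨φ, hφ, hφa, fun b hb => iff_of_true hφa hb⟩
      · exact ⟨φ.not, hφ, hφa, fun b hb => iff_of_false hφa hb⟩
    refine ⟨lit.and χ, Finset.union_subset hlitV hχV, sat_and.2 ⟨hlita, hχa⟩, fun b hb => ?_⟩
    rw [sat_and] at hb
    exact Finset.forall_mem_insert _ _ _ |>.2 ⟨hlit b hb.1, hχ b hb.2⟩

end AForm

theorem encT_injective : Function.Injective encT := by
  intro s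
  induction s with
  | var | zero | one => intro t h; cases t <;> simp_all [encT, Nat.pair_eq_pair]
  | add s₁ s₂ ih₁ ih₂ | mul s₁ s₂ ih₁ ih₂ =>
    intro t h
    cases t <;> simp only [encT, Nat.pair_eq_pair] at h <;> grind

theorem encF_injective : Function.Injective encF := by
  intro φ
  induction φ with
  | eq | lt | not | or | ex =>
    intro ψ h
    cases ψ <;> simp only [encF, Nat.pair_eq_pair] at h <;> grind [encT_injective.eq_iff]

theorem primrecPred_of_recursion {β : Type*} [Primcodable β] {P A : β → Prop} {rank : β → ℕ}
    {sub : β → List β} (hrank : Primrec rank) (hsub : Primrec sub) (hA : PrimrecPred A)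
    (rank_lt : ∀ b, ∀ b' ∈ sub b, rank b' < rank b)
    (hP : ∀ b, P b ↔ A b ∧ ∀ b' ∈ sub b, P b') : PrimrecPred P := by
  classical
  have hstep : PrimrecPred fun p : β × List Bool => A p.1 ∧ ∀ v ∈ p.2, v = true :=
    (hA.comp .fst).and ((PrimrecPred.forall_mem_list (Primrec.eq.comp .id (.const true))).comp .snd)
  refine Primrec.primrecPred (Primrec.nat_omega_rec' (fun b => decide (P b)) hrank hsub
    (Primrec.option_some.comp hstep.decide).to₂ rank_lt fun b => ?_)
  simp [hP b]

/-! ### Primitive recursive recognition of codes -/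

/-- `IsTermCode (L, n)`: `n` is the code of a term with all its variables in the list `L`. -/
def IsTermCode (p : List ℕ × ℕ) : Prop := ∃ t : ATerm, encT t = p.2 ∧ t.fv ⊆ p.1.toFinset

/-- `IsFormCode (L, n)`: `n` is the code of a formula with all its free variables in the list `L`.
The list is part of the input because the recursion passes from `∃ x, φ` with variables `L` to `φ`
with variables `x :: L`. -/
def IsFormCode (p : List ℕ × ℕ) : Prop := ∃ φ : AForm, encF φ = p.2 ∧ φ.fv ⊆ p.1.toFinset

theorem isTermCode_iff (L : List ℕ) (n : ℕ) :
    IsTermCode (L, n) ↔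
      (n.unpair.1 = 0 ∧ n.unpair.2 ∈ L ∨
        (n.unpair.1 = 1 ∨ n.unpair.1 = 2) ∧ n.unpair.2 = 0 ∨ n.unpair.1 = 3 ∨ n.unpair.1 = 4) ∧
      ∀ p ∈ if 3 ≤ n.unpair.1 then [(L, n.unpair.2.unpair.1), (L, n.unpair.2.unpair.2)] else [],
        IsTermCode p := by
  constructor
  · rintro ⟨t, rfl, ht⟩
    cases t with
    | var | zero | one => simp_all [encT, ATerm.fv]
    | add s t | mul s t =>
      obtain ⟨hs, ht⟩ := Finset.union_subset_iff.1 ht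
      simpa [encT] using ⟨⟨s, rfl, hs⟩, ⟨t, rfl, ht⟩⟩
  · obtain ⟨tag, r, rfl⟩ : ∃ tag r, n = Nat.pair tag r := ⟨_, _, n.pair_unpair.symm⟩
    rw [Nat.unpair_pair]
    rintro ⟨⟨rfl, hr⟩ | ⟨rfl | rfl, rfl⟩ | rfl | rfl, hsub⟩
    · exact ⟨.var r, rfl, by simpa [ATerm.fv] using hr⟩
    · exact ⟨.zero, rfl, Finset.empty_subset _⟩
    · exact ⟨.one, rfl, Finset.empty_subset _⟩
    all_goals
      obtain ⟨⟨s, hs, hsL⟩, t, ht, htL⟩ :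
        IsTermCode (L, r.unpair.1) ∧ IsTermCode (L, r.unpair.2) := by simpa using hsub
    · exact ⟨.add s t, by simp [encT, hs, ht], Finset.union_subset hsL htL⟩
    · exact ⟨.mul s t, by simp [encT, hs, ht], Finset.union_subset hsL htL⟩

theorem isFormCode_iff (L : List ℕ) (n : ℕ) :
    IsFormCode (L, n) ↔
      (n.unpair.1 ≤ 1 ∧ IsTermCode (L, n.unpair.2.unpair.1) ∧ IsTermCode (L, n.unpair.2.unpair.2) ∨
        n.unpair.1 = 2 ∨ n.unpair.1 = 3 ∨ n.unpair.1 = 4) ∧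
      ∀ p ∈ if n.unpair.1 = 2 then [(L, n.unpair.2)]
        else if n.unpair.1 = 3 then [(L, n.unpair.2.unpair.1), (L, n.unpair.2.unpair.2)]
        else if n.unpair.1 = 4 then [(n.unpair.2.unpair.1 :: L, n.unpair.2.unpair.2)] else [],
        IsFormCode p := by
  constructor
  · rintro ⟨φ, rfl, hφ⟩
    cases φ with
    | eq s t | lt s t =>
      obtain ⟨hs, ht⟩ := Finset.union_subset_iff.1 hφ
      simpa [encF] using ⟨⟨s, rfl, hs⟩, ⟨t, rfl, ht⟩⟩
    | not φ => simpa [encF] using ⟨φ, rfl, hφ⟩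
    | or φ ψ =>
      obtain ⟨hφ, hψ⟩ := Finset.union_subset_iff.1 hφ
      simpa [encF] using ⟨⟨φ, rfl, hφ⟩, ⟨ψ, rfl, hψ⟩⟩
    | ex x φ =>
      simpa [encF] using ⟨φ, rfl, by simpa [AForm.fv, Finset.subset_insert_iff] using hφ⟩
  · obtain ⟨tag, r, rfl⟩ : ∃ tag r, n = Nat.pair tag r := ⟨_, _, n.pair_unpair.symm⟩
    rw [Nat.unpair_pair]
    rintro ⟨⟨htag, ⟨s, hs, hsL⟩, t, ht, htL⟩ | rfl | rfl | rfl, hsub⟩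
    · obtain rfl | rfl : tag = 0 ∨ tag = 1 := by simpa [Nat.le_one_iff_eq_zero_or_eq_one] using htag
      · exact ⟨.eq s t, by simp_all [encF], Finset.union_subset hsL htL⟩
      · exact ⟨.lt s t, by simp_all [encF], Finset.union_subset hsL htL⟩
    · obtain ⟨φ, hφ, hφL⟩ : IsFormCode (L, r) := by simpa using hsub
      exact ⟨.not φ, by simp [encF, hφ], hφL⟩
    · obtain ⟨⟨φ, hφ, hφL⟩, ψ, hψ, hψL⟩ :
        IsFormCode (L, r.unpair.1) ∧ IsFormCode (L, r.unpair.2) := by simpa using hsub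
      exact ⟨.or φ ψ, by simp [encF, hφ, hψ], Finset.union_subset hφL hψL⟩
    · obtain ⟨φ, hφ, hφL⟩ : IsFormCode (r.unpair.1 :: L, r.unpair.2) := by simpa using hsub
      exact ⟨.ex r.unpair.1 φ, by simp [encF, hφ],
        by simpa [AForm.fv, Finset.subset_insert_iff] using hφL⟩

theorem unpair_snd_lt {n : ℕ} (h : n.unpair.1 ≠ 0) : n.unpair.2 < n := by
  nth_rewrite 2 [← n.pair_unpair]
  have := Nat.add_le_pair n.unpair.1 n.unpair.2
  omega

theorem unpair_unpair_fst_lt {n : ℕ} (h : n.unpair.1 ≠ 0) : n.unpair.2.unpair.1 < n :=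
  (Nat.unpair_left_le _).trans_lt (unpair_snd_lt h)

theorem unpair_unpair_snd_lt {n : ℕ} (h : n.unpair.1 ≠ 0) : n.unpair.2.unpair.2 < n :=
  (Nat.unpair_right_le _).trans_lt (unpair_snd_lt h)

section Primrec

variable {α : Type*} [Primcodable α] {f : α → ℕ}

theorem primrec_unpair_fst (hf : Primrec f) : Primrec fun a => (f a).unpair.1 :=
  Primrec.fst.comp (Primrec.unpair.comp hf)

theorem primrec_unpair_snd (hf : Primrec f) : Primrec fun a => (f a).unpair.2 :=
  Primrec.snd.comp (Primrec.unpair.comp hf)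

end Primrec

theorem primrecPred_isTermCode : PrimrecPred IsTermCode := by
  have tag : Primrec fun p : List ℕ × ℕ => p.2.unpair.1 := primrec_unpair_fst .snd
  have arg : Primrec fun p : List ℕ × ℕ => p.2.unpair.2 := primrec_unpair_snd .snd
  have tag_eq (i : ℕ) : PrimrecPred fun p : List ℕ × ℕ => p.2.unpair.1 = i :=
    Primrec.eq.comp tag (.const i)
  have arg_mem : PrimrecPred fun p : List ℕ × ℕ => p.2.unpair.2 ∈ p.1 :=
    ((PrimrecRel.exists_mem_list Primrec.eq).comp .fst arg).of_eq fun p => by simp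
  refine primrecPred_of_recursion (rank := Prod.snd) .snd
    (.ite (Primrec.nat_le.comp (.const 3) tag)
      (Primrec.list_cons.comp (Primrec.fst.pair (primrec_unpair_fst arg))
        (Primrec.list_cons.comp (Primrec.fst.pair (primrec_unpair_snd arg)) (.const [])))
      (.const []))
    (((tag_eq 0).and arg_mem).or ((((tag_eq 1).or (tag_eq 2)).and
      (Primrec.eq.comp arg (.const 0))).or ((tag_eq 3).or (tag_eq 4))))
    (fun p q hq => ?_) fun p => isTermCode_iff p.1 p.2
  split_ifs at hq with h
  · have h0 : p.2.unpair.1 ≠ 0 := by omega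
    obtain rfl | rfl : q = _ ∨ q = _ := by simpa using hq
    exacts [unpair_unpair_fst_lt h0, unpair_unpair_snd_lt h0]
  · simp at hq

theorem primrecPred_isFormCode : PrimrecPred IsFormCode := by
  have tag : Primrec fun p : List ℕ × ℕ => p.2.unpair.1 := primrec_unpair_fst .snd
  have arg : Primrec fun p : List ℕ × ℕ => p.2.unpair.2 := primrec_unpair_snd .snd
  have tag_eq (i : ℕ) : PrimrecPred fun p : List ℕ × ℕ => p.2.unpair.1 = i :=
    Primrec.eq.comp tag (.const i)
  have fstArg : Primrec fun p : List ℕ × ℕ => p.2.unpair.2.unpair.1 := primrec_unpair_fst arg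
  have sndArg : Primrec fun p : List ℕ × ℕ => p.2.unpair.2.unpair.2 := primrec_unpair_snd arg
  refine primrecPred_of_recursion (rank := Prod.snd) .snd
    (.ite (tag_eq 2) (Primrec.list_cons.comp (Primrec.fst.pair arg) (.const []))
      (.ite (tag_eq 3)
        (Primrec.list_cons.comp (Primrec.fst.pair fstArg)
          (Primrec.list_cons.comp (Primrec.fst.pair sndArg) (.const [])))
        (.ite (tag_eq 4)
          (Primrec.list_cons.comp ((Primrec.list_cons.comp fstArg .fst).pair sndArg) (.const []))
          (.const []))))
    (((Primrec.nat_le.comp tag (.const 1)).and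
      ((primrecPred_isTermCode.comp (Primrec.fst.pair fstArg)).and
        (primrecPred_isTermCode.comp (Primrec.fst.pair sndArg)))).or
      ((tag_eq 2).or ((tag_eq 3).or (tag_eq 4))))
    (fun p q hq => ?_) fun p => isFormCode_iff p.1 p.2
  have h0 : p.2.unpair.1 ≠ 0 := by rintro h; simp [h] at hq
  split_ifs at hq
  · obtain rfl : q = _ := by simpa using hq
    exact unpair_snd_lt h0
  · obtain rfl | rfl : q = _ ∨ q = _ := by simpa using hq
    exacts [unpair_unpair_fst_lt h0, unpair_unpair_snd_lt h0]
  · obtain rfl : q = _ := by simpa using hq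
    exact unpair_unpair_snd_lt h0
  · simp at hq

/-- A closed term denoting `2 ^ n`. -/
def ATerm.powTwo : ℕ → ATerm
  | 0 => one
  | n + 1 => add (powTwo n) (powTwo n)

/-- The formula saying that the `n`-th binary digit of the variable `d` is `1`, that is, `n ∈ d` in
the sense of Ackermann. The power of two is written out as a term, so no exponentiation occurs. -/
def bitForm (d n : ℕ) : AForm :=
  ex (d + 1) (ex (d + 2) (AForm.and
    (eq (var d) (add (mul (var (d + 1)) (powTwo (n + 1))) (add (powTwo n) (var (d + 2)))))
    (lt (var (d + 2)) (powTwo n))))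

theorem ATerm.fv_powTwo (n : ℕ) : (powTwo n).fv = ∅ := by
  induction n with
  | zero => rfl
  | succ n ih => simp [powTwo, fv, ih]

theorem fv_bitForm_subset (d n : ℕ) : (bitForm d n).fv ⊆ {d} := by
  intro i
  simp only [bitForm, AForm.fv, AForm.fv_and, ATerm.fv, fv_powTwo, Finset.mem_erase,
    Finset.mem_union, Finset.mem_singleton, Finset.notMem_empty]
  tauto

theorem primrec_encT_powTwo : Primrec fun n => encT (powTwo n) := by
  have double : Primrec₂ fun (_ c : ℕ) => Nat.pair 3 (Nat.pair c c) :=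
    Primrec₂.natPair.comp (.const 3) (Primrec₂.natPair.comp .snd .snd)
  refine (Primrec.nat_rec₁ (encT one) double).of_eq fun n => ?_
  induction n with
  | zero => rfl
  | succ n ih => exact congrArg (fun c => Nat.pair 3 (Nat.pair c c)) ih

theorem primrec_encF_bitForm (d : ℕ) : Primrec fun n => encF (bitForm d n) := by
  have pair {f g : ℕ → ℕ} : Primrec f → Primrec g → Primrec fun n => Nat.pair (f n) (g n) :=
    Primrec₂.natPair.comp
  have pow := primrec_encT_powTwo
  have const (i : ℕ) : Primrec fun _ : ℕ => i := .const i
  have code (t : ATerm) : Primrec fun _ : ℕ => encT t := .const _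
  have sum : Primrec fun n => encT (add (mul (var (d + 1)) (powTwo (n + 1)))
      (add (powTwo n) (var (d + 2)))) :=
    pair (const 3) (pair (pair (const 4) (pair (code _) (pow.comp .succ)))
      (pair (const 3) (pair pow (code _))))
  have body : Primrec fun n => encF (AForm.and
      (eq (var d) (add (mul (var (d + 1)) (powTwo (n + 1))) (add (powTwo n) (var (d + 2)))))
      (lt (var (d + 2)) (powTwo n))) :=
    pair (const 2) (pair (const 3) (pair (pair (const 2) (pair (const 0) (pair (code _) sum)))
      (pair (const 2) (pair (const 1) (pair (code _) pow)))))
  exact pair (const 4) (pair (const (d + 1)) (pair (const 4) (pair (const (d + 2)) body)))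

/-- The formulas `⌜φ⌝ ∈ d ↔ φ`, for `φ` in the variables below `k`. They say that `d` codes the
complete type of the tuple assigned to these variables. -/
def codingType (k d : ℕ) : Set AForm :=
  (fun φ => (bitForm d (encF φ)).iff φ) '' {φ | φ.fv ⊆ Finset.range k}

theorem fv_subset_of_mem_codingType {k d : ℕ} {ψ : AForm} (hψ : ψ ∈ codingType k d) :
    ψ.fv ⊆ insert d (Finset.range k) := by
  obtain ⟨φ, hφ, rfl⟩ := hψ
  rw [AForm.fv_iff]
  exact Finset.union_subset
    ((fv_bitForm_subset d _).trans (Finset.singleton_subset_iff.2 (Finset.mem_insert_self _ _)))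
    (hφ.trans (Finset.subset_insert _ _))

/-- The code of `φ → ψ` in terms of those of `φ` and `ψ`. -/
def impCode (m n : ℕ) : ℕ := Nat.pair 3 (Nat.pair (Nat.pair 2 m) n)

/-- The code of `φ ↔ ψ` in terms of those of `φ` and `ψ`. -/
def iffCode (m n : ℕ) : ℕ :=
  Nat.pair 2 (Nat.pair 3 (Nat.pair (Nat.pair 2 (impCode m n)) (Nat.pair 2 (impCode n m))))

theorem primrec₂_impCode : Primrec₂ impCode :=
  Primrec₂.natPair.comp (.const 3)
    (Primrec₂.natPair.comp (Primrec₂.natPair.comp (.const 2) .fst) .snd)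

theorem primrec₂_iffCode : Primrec₂ iffCode :=
  Primrec₂.natPair.comp (.const 2) (Primrec₂.natPair.comp (.const 3) (Primrec₂.natPair.comp
    (Primrec₂.natPair.comp (.const 2) primrec₂_impCode)
    (Primrec₂.natPair.comp (.const 2) (primrec₂_impCode.comp .snd .fst))))

theorem right_le_iffCode (m n : ℕ) : n ≤ iffCode m n :=
  calc
    n ≤ impCode m n := (Nat.right_le_pair _ _).trans (Nat.right_le_pair _ _)
    _ ≤ Nat.pair 2 (impCode m n) := Nat.right_le_pair _ _
    _ ≤ _ := Nat.left_le_pair _ _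
    _ ≤ _ := Nat.right_le_pair _ _
    _ ≤ iffCode m n := Nat.right_le_pair _ _

theorem exists_mem_codingType_encF_eq_iff (k d n : ℕ) :
    (∃ ψ ∈ codingType k d, encF ψ = n) ↔
      ∃ m < n + 1, IsFormCode (List.range k, m) ∧ iffCode (encF (bitForm d m)) m = n := by
  constructor
  · rintro ⟨-, ⟨φ, hφ, rfl⟩, rfl⟩
    refine ⟨encF φ, Nat.lt_succ_of_le (right_le_iffCode _ _), ⟨φ, rfl, ?_⟩, rfl⟩
    rwa [List.toFinset_range]
  · rintro ⟨-, -, ⟨φ, rfl, hφ⟩, rfl⟩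
    rw [List.toFinset_range] at hφ
    exact ⟨_, ⟨φ, hφ, rfl⟩, rfl⟩

theorem computablePred_codingType (k d : ℕ) :
    ComputablePred fun n => ∃ ψ ∈ codingType k d, encF ψ = n := by
  have iffCode_eq : PrimrecRel fun m n => iffCode (encF (bitForm d m)) m = n :=
    Primrec.eq.comp (primrec₂_iffCode.comp ((primrec_encF_bitForm d).comp .fst) .fst) .snd
  have isCode : PrimrecRel fun m n =>
      IsFormCode (List.range k, m) ∧ iffCode (encF (bitForm d m)) m = n :=
    (primrecPred_isFormCode.comp ((Primrec.const _).pair .fst)).and iffCode_eq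
  exact ((isCode.exists_lt.comp .succ .id).of_eq fun n =>
    (exists_mem_codingType_encF_eq_iff k d n).symm).computablePred

/-! ### Arithmetic in models of the base axioms -/

/-- The axioms in `paBaseAx`, stated as properties of the operations of `M`. -/
structure BaseAxioms (M : Type*) [Zero M] [One M] [Add M] [Mul M] [LT M] : Prop where
  add_assoc (x y z : M) : x + (y + z) = x + y + z
  add_comm (x y : M) : x + y = y + x
  mul_assoc (x y z : M) : x * (y * z) = x * y * z
  mul_comm (x y : M) : x * y = y * x
  mul_add (x y z : M) : x * (y + z) = x * y + x * z
  add_zero (x : M) : x + 0 = x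
  mul_zero (x : M) : x * 0 = 0
  mul_one (x : M) : x * 1 = x
  lt_irrefl (x : M) : ¬x < x
  lt_trans (x y z : M) : x < y → y < z → x < z
  lt_trichotomy (x y : M) : x < y ∨ x = y ∨ y < x
  add_lt_add_right (x y z : M) : x < y → x + z < y + z
  mul_lt_mul_right (x y z : M) : 0 < z → x < y → x * z < y * z
  not_lt_zero (x : M) : ¬x < 0
  lt_iff_add_one_lt_or_eq (x y : M) : x < y ↔ x + 1 < y ∨ x + 1 = y
  zero_lt_one : (0 : M) < 1

/-- A linearly ordered commutative semiring with least element `0` in which `x + 1` is the successor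
of `x`: the algebraic structure of a model of the base axioms of arithmetic. -/
class DiscretelyOrderedSemiring (R : Type*) extends
    CommSemiring R, LinearOrder R, IsStrictOrderedRing R, IsBotZeroClass R where
  add_one_le_of_lt {x y : R} : x < y → x + 1 ≤ y

section Models

variable {M : Type*} [Zero M] [One M] [Add M] [Mul M] [LT M]

theorem IsPAModel.baseAxioms (hM : IsPAModel M) : BaseAxioms M := by
  have sat (x y z : M) :
      ∀ φ ∈ paBaseAx, φ.Sat fun n => if n = 0 then x else if n = 1 then y else z :=
    fun φ hφ => hM φ (.inl hφ) _
  simp only [paBaseAx, List.forall_mem_cons, AForm.sat_and, AForm.sat_imp, AForm.Sat, ATerm.val,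
    if_true, one_ne_zero, if_false, OfNat.ofNat_ne_zero, OfNat.ofNat_ne_one, ← iff_def] at sat
  simp only [forall_and] at sat
  obtain ⟨add_assoc, add_comm, mul_assoc, mul_comm, mul_add, add_zero, mul_zero, mul_one, lt_irrefl,
    lt_trans, lt_trichotomy, add_lt_add_right, mul_lt_mul_right, not_lt_zero,
    lt_iff_add_one_lt_or_eq, zero_lt_one, -⟩ := sat
  exact {
    add_assoc, mul_assoc, mul_add, lt_trans, add_lt_add_right, mul_lt_mul_right
    add_comm x y := add_comm x y 0
    mul_comm x y := mul_comm x y 0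
    add_zero x := add_zero x 0 0
    mul_zero x := mul_zero x 0 0
    mul_one x := mul_one x 0 0
    lt_irrefl x := lt_irrefl x 0 0
    lt_trichotomy x y := lt_trichotomy x y 0
    not_lt_zero x := not_lt_zero x 0 0
    lt_iff_add_one_lt_or_eq x y := lt_iff_add_one_lt_or_eq x y 0
    zero_lt_one := zero_lt_one 0 0 0 }

namespace BaseAxioms

/-- The semiring structure given by the base axioms. -/
abbrev commSemiring (h : BaseAxioms M) : CommSemiring M where
  add_assoc x y z := (h.add_assoc x y z).symm
  add_comm := h.add_comm
  zero_add x := by rw [h.add_comm, h.add_zero]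
  add_zero := h.add_zero
  mul_assoc x y z := (h.mul_assoc x y z).symm
  mul_comm := h.mul_comm
  one_mul x := by rw [h.mul_comm, h.mul_one]
  mul_one := h.mul_one
  zero_mul x := by rw [h.mul_comm, h.mul_zero]
  mul_zero := h.mul_zero
  left_distrib := h.mul_add
  right_distrib x y z := by rw [h.mul_comm, h.mul_add, h.mul_comm z, h.mul_comm z]
  nsmul := nsmulRec

open Classical in
/-- The linear order given by the base axioms. -/
noncomputable abbrev linearOrder (h : BaseAxioms M) : LinearOrder M :=
  haveI : IsStrictTotalOrder M (· < ·) :=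
    { trichotomous x y hxy hyx := ((h.lt_trichotomy x y).resolve_left hxy).resolve_right hyx
      irrefl := h.lt_irrefl
      trans := h.lt_trans }
  linearOrderOfSTO (· < ·)

/-- The base axioms make a structure into a discretely ordered semiring. -/
noncomputable abbrev discretelyOrderedSemiring (h : BaseAxioms M) : DiscretelyOrderedSemiring M :=
  letI := h.commSemiring
  letI := h.linearOrder
  { h.commSemiring, h.linearOrder with
    exists_pair_ne := ⟨0, 1, ne_of_lt h.zero_lt_one⟩
    zero_le_one := le_of_lt h.zero_lt_one
    add_le_add_left x y hxy z := hxy.elim (fun e => .inl (congrArg (· + z) e))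
      fun hlt => .inr (h.add_lt_add_right x y z hlt)
    le_of_add_le_add_left x y z hxy := by
      contrapose! hxy
      rw [h.add_comm x, h.add_comm x]
      exact h.add_lt_add_right _ _ _ hxy
    mul_lt_mul_of_pos_left z hz x y hxy := by
      change z * x < z * y
      rw [h.mul_comm z, h.mul_comm z]
      exact h.mul_lt_mul_right x y z hz hxy
    mul_lt_mul_of_pos_right z hz x y hxy := h.mul_lt_mul_right x y z hz hxy
    isBot_zero x := le_of_not_gt (h.not_lt_zero x)
    add_one_le_of_lt {x y} hxy := ((h.lt_iff_add_one_lt_or_eq x y).1 hxy).elim le_of_lt le_of_eq }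

end BaseAxioms

end Models

theorem testBit_iff_two_pow_le_mod (c n : ℕ) : c.testBit n ↔ 2 ^ n ≤ c % 2 ^ (n + 1) := by
  have testBit_mod : (c % 2 ^ (n + 1)).testBit n = c.testBit n := by simp
  have mod_lt : c % 2 ^ (n + 1) < 2 ^ (n + 1) := Nat.mod_lt _ (by positivity)
  rw [← testBit_mod]
  refine ⟨Nat.ge_two_pow_of_testBit, fun h => ?_⟩
  exact Nat.testBit_of_two_pow_le_and_two_pow_add_one_gt h mod_lt

section DiscretelyOrderedSemiring

variable {R : Type*} [DiscretelyOrderedSemiring R]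

open DiscretelyOrderedSemiring

theorem std_eq_natCast (n : ℕ) : (std n : R) = n := by
  induction n with
  | zero => simp [std]
  | succ n ih => rw [Nat.cast_succ, ← ih]; rfl

theorem exists_eq_natCast_of_lt {n : ℕ} {x : R} (hx : x < n) : ∃ i < n, x = i := by
  induction n with
  | zero => exact absurd hx (by simp)
  | succ n ih =>
    obtain hlt | rfl | hgt := lt_trichotomy x n
    · obtain ⟨i, hi, rfl⟩ := ih hlt
      exact ⟨i, hi.trans n.lt_succ_self, rfl⟩
    · exact ⟨n, n.lt_succ_self, rfl⟩
    · exact absurd hx (not_lt.2 (by simpa using add_one_le_of_lt hgt))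

theorem eq_of_mul_add_eq_mul_add {m q q' r r' : R} (h : m * q + r = m * q' + r') (hr : r < m)
    (hr' : r' < m) : r = r' := by
  have not_lt_of_eq {q q' r r' : R} (h : m * q + r = m * q' + r') (hr : r < m) : ¬q < q' :=
    fun hq => h.not_lt <| calc
      m * q + r < m * q + m := by gcongr
      _ = m * (q + 1) := by ring
      _ ≤ m * q' := by gcongr; exacts [zero_le, add_one_le_of_lt hq]
      _ ≤ m * q' + r' := le_add_of_nonneg_right zero_le
  obtain rfl : q = q' :=
    le_antisymm (not_lt.1 (not_lt_of_eq h.symm hr')) (not_lt.1 (not_lt_of_eq h hr))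
  exact add_left_cancel h

theorem mbeta_unique {c d i y y' : R} (h : mbeta c d i y) (h' : mbeta c d i y') : y = y' := by
  obtain ⟨q, hq, hy⟩ := h
  obtain ⟨q', hq', hy'⟩ := h'
  exact eq_of_mul_add_eq_mul_add (hq.symm.trans hq') hy hy'

theorem exists_mbeta_natCast (R : Type*) [DiscretelyOrderedSemiring R] (f : ℕ → ℕ) (n : ℕ) :
    ∃ c d : R, ∀ i ≤ n, mbeta c d i (f i) := by
  let l : List ℕ := (List.range (n + 1)).map f
  let c : ℕ := (Nat.unbeta l).unpair.1
  let d : ℕ := (Nat.unbeta l).unpair.2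
  refine ⟨c, d, fun i hi => ?_⟩
  have mod_eq : c % ((i + 1) * d + 1) = f i := by
    have hil : i < l.length := by simpa [l] using Nat.lt_succ_of_le hi
    simpa [Nat.beta, l] using Nat.beta_unbeta_coe l ⟨i, hil⟩
  have div_add_mod : c = (1 + (i + 1) * d) * (c / ((i + 1) * d + 1)) + f i := by
    rw [← mod_eq, add_comm 1, Nat.div_add_mod]
  have lt_modulus : f i < 1 + (i + 1) * d := by
    rw [← mod_eq, add_comm 1]
    exact Nat.mod_lt _ (Nat.succ_pos _)
  exact ⟨(c / ((i + 1) * d + 1) : ℕ), by exact_mod_cast div_add_mod, by exact_mod_cast lt_modulus⟩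

theorem mpow_std_iff {p n : ℕ} {y : R} : mpow (p : R) (std n) y ↔ y = p ^ n := by
  rw [std_eq_natCast]
  constructor
  · rintro ⟨c, d, hzero, hsucc, hn⟩
    have hpow (j : ℕ) (hj : j ≤ n) : mbeta c d j (p ^ j) := by
      induction j with
      | zero => simpa using hzero
      | succ j ih =>
        rw [Nat.cast_succ, pow_succ']
        exact hsucc j (p ^ j) (by exact_mod_cast hj) (ih (Nat.le_of_succ_le hj))
    exact mbeta_unique hn (hpow n le_rfl)
  · rintro rfl
    obtain ⟨c, d, hcd⟩ := exists_mbeta_natCast R (p ^ ·) n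
    push_cast at hcd
    refine ⟨c, d, by simpa using hcd 0 n.zero_le, fun j u hj hu => ?_, hcd n le_rfl⟩
    obtain ⟨i, hi, rfl⟩ := exists_eq_natCast_of_lt hj
    rw [mbeta_unique hu (hcd i hi.le)]
    simpa [pow_succ'] using hcd (i + 1) hi

theorem mack_std_iff {n : ℕ} {b : R} :
    mack (std n) b ↔ ∃ u v : R, b = u * 2 ^ (n + 1) + (2 ^ n + v) ∧ v < 2 ^ n := by
  have two : (1 + 1 : R) = (2 : ℕ) := by norm_num
  simp only [mack, two, mpow_std_iff, exists_and_left, exists_eq_left]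
  simp [pow_succ, mul_two]

theorem mack_std_natCast {n c : ℕ} : mack (std n) (c : R) ↔ c.testBit n := by
  rw [mack_std_iff, testBit_iff_two_pow_le_mod]
  have hc := Nat.div_add_mod c (2 ^ (n + 1))
  have hlt : c % 2 ^ (n + 1) < 2 ^ (n + 1) := Nat.mod_lt _ (by positivity)
  constructor
  · rintro ⟨u, v, hu, hv⟩
    have hv' : 2 ^ n + v < 2 ^ (n + 1) := by rw [pow_succ, mul_two]; gcongr
    have remainder_eq : 2 ^ n + v = ((c % 2 ^ (n + 1) : ℕ) : R) :=
      eq_of_mul_add_eq_mul_add (m := 2 ^ (n + 1)) (q := u) (q' := (c / 2 ^ (n + 1) : ℕ))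
        (by rw [mul_comm, ← hu]; exact_mod_cast hc.symm) hv' (by exact_mod_cast hlt)
    have : (2 ^ n : R) ≤ (c % 2 ^ (n + 1) : ℕ) := remainder_eq ▸ le_add_of_nonneg_right zero_le
    exact_mod_cast this
  · intro hle
    obtain ⟨v, hv⟩ := Nat.exists_eq_add_of_le hle
    refine ⟨(c / 2 ^ (n + 1) : ℕ), v, ?_, ?_⟩
    · rw [hv, mul_comm] at hc
      exact_mod_cast hc.symm
    · rw [hv, pow_succ, mul_two] at hlt
      exact_mod_cast Nat.lt_of_add_lt_add_left hlt

theorem exists_forall_lt_mem_iff_mack (R : Type*) [DiscretelyOrderedSemiring R] (A : Set ℕ)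
    (K : ℕ) : ∃ c : R, ∀ n < K, (n ∈ A ↔ mack (std n) c) := by
  classical
  refine ⟨(Nat.ofBits fun i : Fin K => decide (i.1 ∈ A) : ℕ), fun n hn => ?_⟩
  rw [mack_std_natCast, Nat.testBit_ofBits_lt _ n hn, decide_eq_true_iff]

theorem ATerm.val_powTwo (a : ℕ → R) (n : ℕ) : (powTwo n).val a = 2 ^ n := by
  induction n with
  | zero => simp [powTwo, val]
  | succ n ih => rw [powTwo, val, ih, pow_succ, mul_two]

theorem sat_bitForm_iff {d n : ℕ} {a : ℕ → R} : (bitForm d n).Sat a ↔ mack (std n) (a d) := by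
  simp [mack_std_iff, bitForm, AForm.Sat, ATerm.val, ATerm.val_powTwo]

end DiscretelyOrderedSemiring

/-! ### Coding and realizing complete types -/

section RecSat

variable {M : Type*} [DiscretelyOrderedSemiring M]

theorem RecSat.exists_forall_mack_iff_sat (hM : RecSat M) {k d v : ℕ} {a : ℕ → M}
    (hfin : ∀ s : Finset AForm, (∀ φ ∈ s, φ.fv ⊆ Finset.range k) → ∃ x : M, ∀ φ ∈ s,
      (mack (std (encF φ)) (Function.update a v x d) ↔ φ.Sat (Function.update a v x))) :
    ∃ x : M, ∀ φ : AForm, φ.fv ⊆ Finset.range k →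
      (mack (std (encF φ)) (Function.update a v x d) ↔ φ.Sat (Function.update a v x)) := by
  obtain ⟨x, hx⟩ := hM (codingType k d) v a (computablePred_codingType k d)
    ⟨insert d (Finset.range k), fun ψ hψ =>
      (fv_subset_of_mem_codingType hψ).trans (Finset.subset_insert _ _)⟩ fun s hs => by
    obtain ⟨t, ht, rfl⟩ := Finset.subset_set_image_iff.1 hs
    obtain ⟨x, hx⟩ := hfin t ht
    exact ⟨x, Finset.forall_mem_image.2 fun φ hφ => by simpa [sat_bitForm_iff] using hx φ hφ⟩
  exact ⟨x, fun φ hφ => by simpa [sat_bitForm_iff] using hx _ ⟨φ, hφ, rfl⟩⟩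

theorem RecSat.exists_mem_SSy_forall_encF_mem_iff (hM : RecSat M) (k : ℕ) (a : ℕ → M) :
    ∃ T ∈ SSy M, ∀ φ : AForm, φ.fv ⊆ Finset.range k → (encF φ ∈ T ↔ φ.Sat a) := by
  have sat_update {φ : AForm} (hφ : φ.fv ⊆ Finset.range k) (c : M) :
      φ.Sat (Function.update a k c) ↔ φ.Sat a :=
    AForm.sat_congr_of_fv_subset_range hφ fun i hi => Function.update_of_ne hi.ne _ _
  obtain ⟨c, hc⟩ := hM.exists_forall_mack_iff_sat (k := k) (d := k) (v := k) (a := a) fun s hs => by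
    obtain ⟨c, hc⟩ := exists_forall_lt_mem_iff_mack M (encF '' {φ | φ.Sat a}) (s.sup encF + 1)
    refine ⟨c, fun φ hφ => ?_⟩
    rw [Function.update_self, sat_update (hs φ hφ),
      ← hc _ (Nat.lt_succ_of_le (Finset.le_sup hφ)), encF_injective.mem_set_image, Set.mem_ofPred]
  simp only [Function.update_self] at hc
  exact ⟨{n | mack (std n) c}, ⟨c, fun _ => Iff.rfl⟩, fun φ hφ => (hc φ hφ).trans (sat_update hφ c)⟩

end RecSat

section TupleEquiv

variable {M N : Type*} [Zero M] [One M] [Add M] [Mul M] [LT M] [Zero N] [One N] [Add N] [Mul N]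
  [LT N]

/-- The tuples formed by the first `k` values of `a` and `b` have the same complete type. -/
def TupleEquiv (k : ℕ) (a : ℕ → M) (b : ℕ → N) : Prop :=
  ∀ φ : AForm, φ.fv ⊆ Finset.range k → (φ.Sat a ↔ φ.Sat b)

namespace TupleEquiv

theorem symm {k : ℕ} {a : ℕ → M} {b : ℕ → N} (h : TupleEquiv k a b) : TupleEquiv k b a :=
  fun φ hφ => (h φ hφ).symm

theorem congr {k : ℕ} {a a' : ℕ → M} {b b' : ℕ → N} (ha : ∀ i < k, a i = a' i)
    (hb : ∀ i < k, b i = b' i) (h : TupleEquiv k a b) : TupleEquiv k a' b' := fun φ hφ =>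
  (AForm.sat_congr_of_fv_subset_range hφ ha).symm.trans
    ((h φ hφ).trans (AForm.sat_congr_of_fv_subset_range hφ hb))

theorem zero (hTh : ∀ φ : AForm, φ.fv = ∅ → ((∀ a : ℕ → M, φ.Sat a) ↔ ∀ b : ℕ → N, φ.Sat b))
    (a : ℕ → M) (b : ℕ → N) : TupleEquiv 0 a b := by
  intro φ hφ
  have hφ : φ.fv = ∅ := Finset.subset_empty.1 hφ
  rw [AForm.sat_iff_forall_sat hφ a, AForm.sat_iff_forall_sat hφ b, hTh φ hφ]

end TupleEquiv

end TupleEquiv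

theorem TupleEquiv.exists_update {M N : Type*} [DiscretelyOrderedSemiring M]
    [DiscretelyOrderedSemiring N] (hM : RecSat M) (hN : RecSat N) (hSSy : SSy M ⊆ SSy N) {k : ℕ}
    {a : ℕ → M} {b : ℕ → N} (h : TupleEquiv k a b) (x : M) :
    ∃ y : N, TupleEquiv (k + 1) (Function.update a k x) (Function.update b k y) := by
  obtain ⟨T, hT, hTa⟩ := hM.exists_mem_SSy_forall_encF_mem_iff (k + 1) (Function.update a k x)
  obtain ⟨d, hd⟩ := hSSy hT
  have sat_update {φ : AForm} (hφ : φ.fv ⊆ Finset.range (k + 1)) (y : N) :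
      φ.Sat (Function.update (Function.update b (k + 1) d) k y) ↔
        φ.Sat (Function.update b k y) := by
    rw [Function.update_comm k.succ_ne_self]
    exact AForm.sat_congr_of_fv_subset_range hφ fun i hi => Function.update_of_ne hi.ne _ _
  have mack_update {φ : AForm} (hφ : φ.fv ⊆ Finset.range (k + 1)) (y : N) :
      mack (std (encF φ)) (Function.update (Function.update b (k + 1) d) k y (k + 1)) ↔
        φ.Sat (Function.update a k x) := by
    rw [Function.update_of_ne k.succ_ne_self, Function.update_self, ← hd, hTa φ hφ]
  obtain ⟨y, hy⟩ := hN.exists_forall_mack_iff_sat (k := k + 1) (d := k + 1) (v := k)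
    (a := Function.update b (k + 1) d) fun s hs => by
    obtain ⟨χ, hχk, hχx, hχ⟩ := AForm.exists_sat_forall_mem_sat_iff N (Function.update a k x) s hs
    have fv_ex : (ex k χ).fv ⊆ Finset.range k := by
      rwa [AForm.fv, ← Finset.subset_insert_iff, ← Finset.range_add_one]
    obtain ⟨y, hy⟩ := (h (ex k χ) fv_ex).1 ⟨x, hχx⟩
    exact ⟨y, fun φ hφ => by rw [mack_update (hs φ hφ), sat_update (hs φ hφ), hχ _ hy φ hφ]⟩
  exact ⟨y, fun φ hφ => by rw [← mack_update hφ y, hy φ hφ, sat_update hφ]⟩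

/-! ### Back and forth -/

theorem exists_seq_of_exists_update {α : Type*} {P : ℕ → (ℕ → α) → Prop} {Q : ℕ → α → Prop}
    {f₀ : ℕ → α} (congr : ∀ k f g, (∀ i < k, f i = g i) → P k f → P k g) (zero : P 0 f₀)
    (step : ∀ k f, P k f → ∃ x, Q k x ∧ P (k + 1) (Function.update f k x)) :
    ∃ f : ℕ → α, ∀ k, P k f ∧ Q k (f k) := by
  have : Nonempty α := ⟨f₀ 0⟩
  choose! x hQ hP using step
  let F (k : ℕ) : ℕ → α := k.rec f₀ fun k f => Function.update f k (x k f)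
  have F_succ (k : ℕ) : F (k + 1) = Function.update (F k) k (x k (F k)) := rfl
  have hF (k : ℕ) : P k (F k) := by
    induction k with
    | zero => exact zero
    | succ k ih => exact hP k (F k) ih
  have F_eq {k i : ℕ} (hi : i < k) : F k i = x i (F i) := by
    induction k, hi using Nat.le_induction with
    | base => simp [F_succ]
    | succ k hik ih => rw [F_succ, Function.update_of_ne (Nat.ne_of_lt hik), ih]
  exact ⟨fun i => x i (F i), fun k => ⟨congr k _ _ (fun _ => F_eq) (hF k), hQ k _ (hF k)⟩⟩

section Isomorphism

variable {M N : Type*} [DiscretelyOrderedSemiring M] [DiscretelyOrderedSemiring N]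

theorem nonempty_orderRingIso_of_forall_sat_iff {a : ℕ → M} {b : ℕ → N}
    (ha : Function.Surjective a) (hb : Function.Surjective b)
    (h : ∀ φ : AForm, φ.Sat a ↔ φ.Sat b) : Nonempty (M ≃+*o N) := by
  obtain ⟨index, a_index : ∀ x, a (index x) = x⟩ := ha.hasRightInverse
  have b_index (t : ATerm) : b (index (t.val a)) = t.val b :=
    (h (eq (var (index (t.val a))) t)).1 (a_index _)
  have map_lt (x y : M) : b (index x) < b (index y) ↔ x < y := by
    simpa only [AForm.Sat, ATerm.val, a_index] using
      (h (lt (var (index x)) (var (index y)))).symm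
  have map_add (x y : M) : b (index (x + y)) = b (index x) + b (index y) := by
    simpa only [ATerm.val, a_index] using b_index (add (var (index x)) (var (index y)))
  have map_mul (x y : M) : b (index (x * y)) = b (index x) * b (index y) := by
    simpa only [ATerm.val, a_index] using b_index (mul (var (index x)) (var (index y)))
  have injective : Function.Injective fun x => b (index x) := fun x y hxy => by
    simpa only [AForm.Sat, ATerm.val, a_index] using (h (eq (var (index x)) (var (index y)))).2 hxy
  have surjective : Function.Surjective fun x => b (index x) := fun y =>
    (hb y).imp' a fun i hi => (b_index (var i)).trans hi
  exact ⟨{ Equiv.ofBijective _ ⟨injective, surjective⟩ with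
    map_add' := map_add
    map_mul' := map_mul
    map_le_map_iff' {x y} := le_iff_le_iff_lt_iff_lt.2 (map_lt y x) }⟩

theorem exists_surjective_forall_sat_iff [Countable M] [Countable N] (hM : RecSat M)
    (hN : RecSat N)
    (hTh : ∀ φ : AForm, φ.fv = ∅ → ((∀ a : ℕ → M, φ.Sat a) ↔ ∀ b : ℕ → N, φ.Sat b))
    (hSSy : SSy M = SSy N) :
    ∃ (a : ℕ → M) (b : ℕ → N), Function.Surjective a ∧ Function.Surjective b ∧
      ∀ φ : AForm, φ.Sat a ↔ φ.Sat b := by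
  obtain ⟨e, he⟩ := exists_surjective_nat (M ⊕ N)
  obtain ⟨f, hf⟩ := exists_seq_of_exists_update (α := M × N)
    (P := fun k f => TupleEquiv k (Prod.fst ∘ f) (Prod.snd ∘ f))
    (Q := fun k p => (e k).elim (p.1 = ·) (p.2 = ·)) (f₀ := fun _ => (0, 0))
    (fun k f g hfg => TupleEquiv.congr (fun i hi => congrArg Prod.fst (hfg i hi))
      fun i hi => congrArg Prod.snd (hfg i hi)) (TupleEquiv.zero hTh _ _) fun k f hk => by
    simp only [Function.comp_update]
    obtain x | y := e k
    · obtain ⟨y, hy⟩ := hk.exists_update hM hN hSSy.subset x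
      exact ⟨(x, y), rfl, hy⟩
    · obtain ⟨x, hx⟩ := hk.symm.exists_update hN hM hSSy.superset y
      exact ⟨(x, y), rfl, hx.symm⟩
  refine ⟨Prod.fst ∘ f, Prod.snd ∘ f, fun x => ?_, fun y => ?_, fun φ => ?_⟩
  · obtain ⟨k, hk⟩ := he (.inl x)
    exact ⟨k, by simpa [hk] using (hf k).2⟩
  · obtain ⟨k, hk⟩ := he (.inr y)
    exact ⟨k, by simpa [hk] using (hf k).2⟩
  · obtain ⟨k, hk⟩ := φ.fv.exists_nat_subset_range
    exact (hf k).1 φ hk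

theorem recSat_models_isomorphic_general [Countable M] [Countable N] (hM : RecSat M)
    (hN : RecSat N)
    (hTh : ∀ φ : AForm, φ.fv = ∅ → ((∀ a : ℕ → M, φ.Sat a) ↔ ∀ b : ℕ → N, φ.Sat b))
    (hSSy : SSy M = SSy N) : Nonempty (M ≃+*o N) := by
  obtain ⟨a, b, ha, hb, hab⟩ := exists_surjective_forall_sat_iff hM hN hTh hSSy
  exact nonempty_orderRingIso_of_forall_sat_iff ha hb hab

end Isomorphism

/-- two countable recursively saturated models of PA with the
same theory and the same standard system are isomorphic. -/
theorem recSat_models_isomorphic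
    {M N : Type*} [Zero M] [One M] [Add M] [Mul M] [LT M]
    [Zero N] [One N] [Add N] [Mul N] [LT N]
    [Countable M] [Countable N]
    (hM : IsPAModel M) (hN : IsPAModel N)
    (hrsM : RecSat M) (hrsN : RecSat N)
    (hTh : ∀ φ : AForm, AForm.fv φ = ∅ →
      ((∀ a : ℕ → M, AForm.Sat a φ) ↔ (∀ b : ℕ → N, AForm.Sat b φ)))
    (hSSy : SSy M = SSy N) :
    ∃ h : M → N, Function.Bijective h ∧
      h 0 = 0 ∧ h 1 = 1 ∧
      (∀ x y : M, h (x + y) = h x + h y) ∧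
      (∀ x y : M, h (x * y) = h x * h y) ∧
      (∀ x y : M, x < y ↔ h x < h y) := by
  let _ := hM.baseAxioms.discretelyOrderedSemiring
  let _ := hN.baseAxioms.discretelyOrderedSemiring
  obtain ⟨e⟩ := recSat_models_isomorphic_general hrsM hrsN hTh hSSy
  exact ⟨e, e.bijective, map_zero e, map_one e, map_add e, map_mul e,
    fun _ _ => (map_lt_map_iff e).symm⟩
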